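/- For all integers b, d, k with 0 < d < b and k ≥ 2, the exact convergent-series identity holds: I(b,d,k) = b·log b + ∑_{m=1}^∞ (−1)^{m−1}(u_{k;m}(b,d) − u_{k−1;m}(b,d))·( ∑_{n=1}^∞ 1/(bn + d)^{m+1} + ∑_{0 ≤ a < b, a ≠ d} 1/(bd + a)^{m+1} ) + ∑_{m=1}^∞ (−1)^{m−1}(u_{k−1;m}(b,d) − u_{k−2;m}(b,d))/(bd + d)^{m+1}, where all the series converge. -/

import Mathlib

/-!
The Irwin measure `μ_k` places mass `b ^ (-l)` at each base-`b` fraction of length `l` having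
exactly `k` digits `d`. Its total mass is `b` for every `k`, its moments are `momentU b d k`, and
grouping integers by their leading digit expresses `I(b,d,k)` through the Stieltjes transforms
`U_k(t) = ∫ dμ_k(x) / (t + x)` at `t = 1, …, b - 1`. Reading off the first digit of a fraction
gives the functional equation `U_k(t) = ∑_{a<b} U_k(bt + a) + (U_{k-1} - U_k)(bt + d)`. Summed over
`t = 1, 2, …` it telescopes, and as `U_k(t) ~ b / t`, the boundary term tends to `b log b`. Hence
`I(b,d,k) = b log b + ∑_{n≥1} (U_{k-1} - U_k)(bn + d) + (U_{k-1} - U_k)(d)`. As `d` may be `1`,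
where the moment expansion need not converge, the functional equation is used once more to move the
last term to the points `bd + a`. Since the masses agree, each difference expands in inverse powers
starting with the exponent `2`, so the expansions can be summed termwise.
-/

open Filter Asymptotics

/-- The Irwin harmonic sum `I(b,d,k)`: sum of `1/m` over positive integers `m`
whose base-`b` digit list contains the digit `d` exactly `k` times. -/
noncomputable def irwinSum (b d k : ℕ) : ℝ :=
  ∑' m : ℕ, if 0 < m ∧ (Nat.digits b m).count d = k then (1 : ℝ) / m else 0

/-- The `m`-th moment of the Irwin measure. -/
noncomputable def momentU (b d k m : ℕ) : ℝ :=
  ∑' l : ℕ, ((b : ℝ) ^ (l * (m + 1)))⁻¹ *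
    ∑ n ∈ Finset.range (b ^ l),
      (if ((Finset.range l).filter fun i => n / b ^ i % b = d).card = k
        then (n : ℝ) ^ m else 0)

section BlockSums

open Finset

theorem sum_Ico_mul_right {M : Type*} [AddCommMonoid M] {c e : ℕ} (h : c ≤ e) (m : ℕ)
    (g : ℕ → M) :
    ∑ n ∈ Ico (c * m) (e * m), g n = ∑ a ∈ Ico c e, ∑ r ∈ range m, g (a * m + r) := by
  induction e, h using Nat.le_induction with
  | base => simp
  | succ e h ih =>
    have hlast : ∑ r ∈ range m, g (e * m + r) = ∑ n ∈ Ico (e * m) ((e + 1) * m), g n := by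
      rw [sum_Ico_eq_sum_range, Nat.succ_mul, Nat.add_sub_cancel_left]
    rw [sum_Ico_succ_top h, ← ih, hlast, sum_Ico_consecutive _ (by gcongr) (by gcongr; lia)]

theorem hasSum_of_hasSum_sum_Ico {f : ℕ → ℝ} (hf : ∀ n, 0 ≤ f n) {u : ℕ → ℕ} (hu : Monotone u)
    (hu' : Tendsto u atTop atTop) {s : ℝ}
    (h : HasSum (fun l => ∑ n ∈ Ico (u l) (u (l + 1)), f n) s) :
    HasSum f (∑ n ∈ range (u 0), f n + s) := by
  have hmono : Monotone fun N => ∑ n ∈ range N, f n := fun M N hMN =>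
    sum_le_sum_of_subset_of_nonneg (range_mono hMN) fun n _ _ => hf n
  have hblocks (L : ℕ) : ∑ n ∈ range (u 0), f n + ∑ l ∈ range L, ∑ n ∈ Ico (u l) (u (l + 1)), f n
      = ∑ n ∈ range (u L), f n := by
    induction L with
    | zero => simp
    | succ L ih =>
      rw [sum_range_succ, ← add_assoc, ih, sum_range_add_sum_Ico f (hu L.le_succ)]
  rw [hasSum_iff_tendsto_nat_of_nonneg hf,
    tendsto_iff_tendsto_subseq_of_monotone hmono hu']
  exact (h.tendsto_sum_nat.const_add _).congr hblocks

theorem tendsto_sum_Ico_one_div_add_one {b : ℕ} (hb : 0 < b) :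
    Tendsto (fun N : ℕ => ∑ m ∈ Ico N (b * N), 1 / ((m : ℝ) + 1)) atTop (nhds (Real.log b)) := by
  have hlog := (Real.tendsto_harmonic_sub_log.comp
    (tendsto_id.const_mul_atTop' hb)).sub Real.tendsto_harmonic_sub_log
  have hharm (n : ℕ) : ((harmonic n : ℚ) : ℝ) = ∑ m ∈ range n, 1 / ((m : ℝ) + 1) := by
    simp [harmonic]
  have := hlog.add_const (Real.log b)
  rw [sub_self, zero_add] at this
  refine this.congr' ?_
  filter_upwards [eventually_gt_atTop 0] with N hN
  have : Real.log (b * N : ℕ) = Real.log b + Real.log N := by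
    push_cast
    exact Real.log_mul (by positivity) (by positivity)
  simp only [Function.comp_apply, id_eq, hharm, this,
    sum_Ico_eq_sub _ (Nat.le_mul_of_pos_left N hb)]
  ring

theorem tendsto_sum_Ico_mul_of_le_of_le {b : ℕ} (hb : 0 < b) {f : ℕ → ℝ} {c : ℝ}
    (hlow : ∀ m, 0 < m → c / (m + 1) ≤ f m) (hupp : ∀ m, 0 < m → f m ≤ c / m) :
    Tendsto (fun N : ℕ => ∑ m ∈ Ico N (b * N), f m) atTop (nhds (c * Real.log b)) := by
  have hlim := (tendsto_sum_Ico_one_div_add_one hb).const_mul c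
  have hboundary : Tendsto (fun N : ℕ => c / N - c / (b * N : ℕ)) atTop (nhds 0) := by
    have h := tendsto_const_div_atTop_nhds_zero_nat c
    simpa using h.sub (h.comp (tendsto_id.const_mul_atTop' hb))
  have hshift (N : ℕ) : ∑ m ∈ Ico N (b * N), c / m =
      c * ∑ m ∈ Ico N (b * N), 1 / ((m : ℝ) + 1) + (c / N - c / (b * N : ℕ)) := by
    have htel := sum_Ico_sub (fun m : ℕ => c / (m : ℝ)) (Nat.le_mul_of_pos_left N hb)
    rw [sum_sub_distrib] at htel
    simp only [mul_sum, mul_one_div, Nat.cast_add_one] at htel ⊢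
    linarith
  have hlim' := hlim.add hboundary
  rw [add_zero] at hlim'
  refine tendsto_of_tendsto_of_tendsto_of_le_of_le' hlim hlim' ?_ ?_ <;>
    filter_upwards [eventually_gt_atTop 0] with N hN
  · rw [mul_sum]
    refine sum_le_sum fun m hm => ?_
    rw [mul_one_div]
    exact hlow m (hN.trans_le (mem_Ico.mp hm).1)
  · rw [← hshift N]
    exact sum_le_sum fun m hm => hupp m (hN.trans_le (mem_Ico.mp hm).1)

end BlockSums

section DigitCount

open Finset

/-- The number of digits equal to `d` among the `l` lowest base-`b` digits of `n`, leading zeros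
included. -/
def digitCount (b d l n : ℕ) : ℕ := #{i ∈ range l | n / b ^ i % b = d}

/-- The numbers whose base-`b` expansion, padded with zeros to length `l`, contains the digit `d`
exactly `k` times. They encode the digit strings of length `l` with this property. -/
def digitStrings (b d k l : ℕ) : Finset ℕ := {n ∈ range (b ^ l) | digitCount b d l n = k}

variable {b d k l : ℕ}

theorem digitCount_zero (n : ℕ) : digitCount b d 0 n = 0 := rfl

theorem digitCount_succ (n : ℕ) :
    digitCount b d (l + 1) n = digitCount b d l (n / b) + if n % b = d then 1 else 0 := by
  simp only [digitCount, card_filter, sum_range_succ' _ l, pow_zero, Nat.div_one, pow_succ',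
    Nat.div_div_eq_div_mul]

theorem digitCount_mul_pow_add {a r : ℕ} (ha : a < b) (hr : r < b ^ l) :
    digitCount b d (l + 1) (a * b ^ l + r) = digitCount b d l r + if a = d then 1 else 0 := by
  have hb : 0 < b := by lia
  induction l generalizing r with
  | zero =>
    obtain rfl : r = 0 := by simpa using hr
    simp [digitCount_succ, digitCount_zero, Nat.mod_eq_of_lt ha]
  | succ l ih =>
    have hn : a * b ^ (l + 1) + r = r + b * (a * b ^ l) := by ring
    have hmod : (a * b ^ (l + 1) + r) % b = r % b := by rw [hn, Nat.add_mul_mod_self_left]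
    have hdiv : (a * b ^ (l + 1) + r) / b = a * b ^ l + r / b := by
      rw [hn, Nat.add_mul_div_left _ _ hb, add_comm]
    have hr' : r / b < b ^ l := Nat.div_lt_of_lt_mul (by rwa [← pow_succ'])
    rw [digitCount_succ, hmod, hdiv, ih hr', digitCount_succ r]
    ring

theorem digitCount_mul_pow_add_eq_succ_iff {a r : ℕ} (ha : a < b) (hr : r < b ^ l) :
    digitCount b d (l + 1) (a * b ^ l + r) = k + 1 ↔
      digitCount b d l r = if a = d then k else k + 1 := by
  rw [digitCount_mul_pow_add ha hr]
  split_ifs <;> simp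

theorem count_digits_eq_digitCount {n : ℕ} (hb : 1 < b) (hn : n ∈ Ico (b ^ l) (b ^ (l + 1))) :
    (Nat.digits b n).count d = digitCount b d (l + 1) n := by
  induction l generalizing n with
  | zero =>
    obtain ⟨hn0, hnb⟩ : 1 ≤ n ∧ n < b := by simpa using hn
    simp [Nat.digits_of_lt b n (by lia) hnb, digitCount_succ, digitCount_zero,
      Nat.mod_eq_of_lt hnb, List.count_singleton]
  | succ l ih =>
    obtain ⟨hlow, hupp⟩ := mem_Ico.mp hn
    have hdiv : n / b ∈ Ico (b ^ l) (b ^ (l + 1)) := mem_Ico.mpr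
      ⟨(Nat.le_div_iff_mul_le (by lia)).mpr hlow, Nat.div_lt_of_lt_mul (by rwa [← pow_succ'])⟩
    rw [Nat.digits_def' hb (hlow.trans_lt' (by positivity)), List.count_cons, ih hdiv,
      digitCount_succ n]
    simp only [beq_iff_eq]

theorem sum_filter_digitCount_succ {M : Type*} [AddCommMonoid M] {c : ℕ} (hc : c ≤ b)
    (g : ℕ → M) :
    ∑ n ∈ Ico (c * b ^ l) (b ^ (l + 1)) with digitCount b d (l + 1) n = k + 1, g n =
      ∑ a ∈ Ico c b, ∑ r ∈ digitStrings b d (if a = d then k else k + 1) l, g (a * b ^ l + r) := by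
  rw [sum_filter, pow_succ', sum_Ico_mul_right hc]
  refine sum_congr rfl fun a ha => ?_
  rw [digitStrings, sum_filter]
  refine sum_congr rfl fun r hr => ?_
  simp only [digitCount_mul_pow_add_eq_succ_iff (mem_Ico.mp ha).2 (mem_range.mp hr)]

theorem sum_digitStrings_succ {M : Type*} [AddCommMonoid M] (g : ℕ → M) :
    ∑ n ∈ digitStrings b d (k + 1) (l + 1), g n =
      ∑ a ∈ range b, ∑ r ∈ digitStrings b d (if a = d then k else k + 1) l, g (a * b ^ l + r) := by
  simpa [digitStrings] using sum_filter_digitCount_succ (l := l) (Nat.zero_le b) g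

theorem digitStrings_succ_zero : digitStrings b d (k + 1) 0 = ∅ := by
  simp [digitStrings, digitCount_zero]

theorem sum_pow_digitCount {R : Type*} [CommSemiring R] (hdb : d < b) (x : R) (l : ℕ) :
    ∑ n ∈ range (b ^ l), x ^ digitCount b d l n = (x + (b - 1 : ℕ)) ^ l := by
  induction l with
  | zero => simp [digitCount_zero]
  | succ l ih =>
    have hdigit : ∑ a ∈ range b, x ^ (if a = d then 1 else 0) = x + (b - 1 : ℕ) := by
      rw [← add_sum_erase _ _ (mem_range.mpr hdb), sum_congr rfl fun a ha => by
        rw [if_neg (ne_of_mem_erase ha), pow_zero]]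
      simp [hdb]
    calc ∑ n ∈ range (b ^ (l + 1)), x ^ digitCount b d (l + 1) n
        = ∑ a ∈ range b, ∑ r ∈ range (b ^ l), x ^ digitCount b d (l + 1) (a * b ^ l + r) := by
          simpa [pow_succ'] using sum_Ico_mul_right (Nat.zero_le b) (b ^ l)
            fun n => x ^ digitCount b d (l + 1) n
      _ = ∑ a ∈ range b, ∑ r ∈ range (b ^ l),
            x ^ (if a = d then 1 else 0) * x ^ digitCount b d l r :=
          sum_congr rfl fun a ha => sum_congr rfl fun r hr => by
            rw [digitCount_mul_pow_add (mem_range.mp ha) (mem_range.mp hr), pow_add, mul_comm]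
      _ = (x + (b - 1 : ℕ)) ^ (l + 1) := by
          rw [← sum_mul_sum, hdigit, ih, pow_succ']

theorem card_digitStrings (hdb : d < b) (k l : ℕ) :
    #(digitStrings b d k l) = (b - 1) ^ (l - k) * l.choose k := by
  have h := congrArg (Polynomial.coeff · k) (sum_pow_digitCount hdb (Polynomial.X (R := ℕ)) l)
  rw [← Polynomial.C_eq_natCast] at h
  simpa only [Polynomial.finsetSum_coeff, Polynomial.coeff_X_pow, Polynomial.coeff_X_add_C_pow,
    Nat.cast_id, eq_comm (a := k), ← card_filter, digitStrings] using h

/-- The digit strings with exactly `k` digits `d` have a negative binomial length distribution. -/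
theorem hasSum_card_digitStrings_div_pow (hdb : d < b) (k : ℕ) :
    HasSum (fun l => ((b : ℝ) ^ l)⁻¹ * #(digitStrings b d k l)) b := by
  have hb : (0 : ℝ) < b := by exact_mod_cast hdb.pos
  have hr : ‖1 - (b : ℝ)⁻¹‖ < 1 := by
    have hb1 : (1 : ℝ) ≤ b := by exact_mod_cast hdb.pos
    rw [Real.norm_of_nonneg (sub_nonneg.mpr (inv_le_one_of_one_le₀ hb1))]
    exact sub_lt_self 1 (by positivity)
  have hshort : ∑ l ∈ range k, ((b : ℝ) ^ l)⁻¹ * #(digitStrings b d k l) = 0 :=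
    sum_eq_zero fun l hl => by
      simp [card_digitStrings hdb, Nat.choose_eq_zero_of_lt (mem_range.mp hl)]
  rw [← hasSum_nat_add_iff' k, hshort, sub_zero]
  convert! (hasSum_choose_mul_geometric_of_norm_lt_one k hr).mul_left ((b : ℝ) ^ k)⁻¹
    using 1
  · ext l
    have hbase : (((b - 1 : ℕ) : ℝ)) = b * (1 - (b : ℝ)⁻¹) := by
      rw [Nat.cast_pred hdb.pos]
      field_simp
    rw [card_digitStrings hdb, Nat.add_sub_cancel]
    push_cast
    rw [hbase, mul_pow, pow_add]
    generalize 1 - (b : ℝ)⁻¹ = p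
    field_simp
  · rw [sub_sub_cancel, inv_pow, pow_succ]
    field_simp

end DigitCount

section IrwinMeasure

open Finset MeasureTheory
open scoped NNReal

/-- The part of the Irwin measure carried by the digit strings of length `l`: each of them,
read as a base-`b` fraction in `[0, 1)`, is an atom of mass `b ^ (-l)`. -/
noncomputable def irwinLevelMeasure (b d k l : ℕ) : Measure ℝ :=
  ((b : ℝ≥0) ^ l)⁻¹ • ∑ n ∈ digitStrings b d k l, Measure.dirac ((n : ℝ) / b ^ l)

/-- The Irwin measure `μ_k` of a base `b` and a digit `d`, the sum of its parts over all lengths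
of digit strings. Strings of different lengths may represent the same fraction. -/
noncomputable def irwinMeasure (b d k : ℕ) : Measure ℝ :=
  Measure.sum (irwinLevelMeasure b d k)

variable {b d k : ℕ}

theorem ae_mem_Icc_irwinMeasure (b d k : ℕ) :
    ∀ᵐ x ∂irwinMeasure b d k, x ∈ Set.Icc (0 : ℝ) 1 := by
  refine Measure.ae_sum_iff.mpr fun l => Measure.ae_smul_measure ?_ _
  refine ae_finsetSum_measure_iff.mpr fun n hn => ?_
  have hn' : (n : ℝ) ≤ b ^ l := by
    exact_mod_cast (mem_range.mp (mem_filter.mp hn).1).le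
  rw [ae_dirac_eq]
  exact ⟨by positivity, div_le_one_of_le₀ hn' (by positivity)⟩

theorem irwinLevelMeasure_univ (b d k l : ℕ) :
    irwinLevelMeasure b d k l Set.univ =
      ENNReal.ofReal (((b : ℝ) ^ l)⁻¹ * #(digitStrings b d k l)) := by
  have hpow : ((b : ℝ) ^ l)⁻¹ = (((b : ℝ≥0) ^ l)⁻¹ : ℝ≥0) := by push_cast; rfl
  rw [hpow, ENNReal.ofReal_mul NNReal.zero_le_coe, ENNReal.ofReal_coe_nnreal,
    ENNReal.ofReal_natCast, irwinLevelMeasure, Measure.smul_apply, Measure.finsetSum_apply,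
    ENNReal.smul_def, smul_eq_mul]
  simp

theorem irwinMeasure_univ (hdb : d < b) : irwinMeasure b d k Set.univ = b := by
  have hmass := hasSum_card_digitStrings_div_pow hdb k
  rw [irwinMeasure, Measure.sum_apply _ MeasurableSet.univ]
  simp only [irwinLevelMeasure_univ]
  rw [← ENNReal.ofReal_tsum_of_nonneg (fun l => by positivity) hmass.summable, hmass.tsum_eq,
    ENNReal.ofReal_natCast]

theorem isFiniteMeasure_irwinMeasure (hdb : d < b) : IsFiniteMeasure (irwinMeasure b d k) :=
  ⟨by simp [irwinMeasure_univ hdb]⟩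

theorem integral_const_irwinMeasure (hdb : d < b) (c : ℝ) :
    ∫ _, c ∂irwinMeasure b d k = b * c := by
  simp [Measure.real, irwinMeasure_univ hdb]

theorem integrable_irwinMeasure_of_continuousOn (hdb : d < b) {f : ℝ → ℝ}
    (hf : ContinuousOn f (Set.Icc 0 1)) : Integrable f (irwinMeasure b d k) := by
  have := isFiniteMeasure_irwinMeasure (k := k) hdb
  have hint := hf.integrableOn_compact (μ := irwinMeasure b d k) isCompact_Icc
  rwa [IntegrableOn, Measure.restrict_eq_self_of_ae_mem (ae_mem_Icc_irwinMeasure b d k)] at hint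

theorem integral_irwinLevelMeasure (b d k l : ℕ) (f : ℝ → ℝ) :
    ∫ x, f x ∂irwinLevelMeasure b d k l =
      ((b : ℝ) ^ l)⁻¹ * ∑ n ∈ digitStrings b d k l, f (n / b ^ l) := by
  rw [irwinLevelMeasure, integral_smul_nnreal_measure,
    integral_finsetSum_measure fun _ _ => integrable_dirac (by simp)]
  simp [NNReal.smul_def]

theorem hasSum_integral_irwinMeasure {f : ℝ → ℝ} (hf : Integrable f (irwinMeasure b d k)) :
    HasSum (fun l => ((b : ℝ) ^ l)⁻¹ * ∑ n ∈ digitStrings b d k l, f (n / b ^ l))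
      (∫ x, f x ∂irwinMeasure b d k) := by
  simp only [← integral_irwinLevelMeasure]
  exact hasSum_integral_measure hf

/-- Self-similarity: a nonempty string with `k + 1` digits `d` is a first digit `a` followed by a
string with `k` or `k + 1` digits `d`, according as `a = d` or not. -/
theorem integral_irwinMeasure_succ {f : ℝ → ℝ} (hf : Integrable f (irwinMeasure b d (k + 1)))
    (hf' : ∀ a < b, Integrable (fun x => f ((a + x) / b))
      (irwinMeasure b d (if a = d then k else k + 1))) :
    ∫ x, f x ∂irwinMeasure b d (k + 1) =
      (b : ℝ)⁻¹ * ∑ a ∈ range b,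
        ∫ x, f ((a + x) / b) ∂irwinMeasure b d (if a = d then k else k + 1) := by
  have hleft := (hasSum_nat_add_iff' 1).mpr (hasSum_integral_irwinMeasure hf)
  simp only [range_one, sum_singleton, digitStrings_succ_zero, sum_empty, mul_zero,
    sub_zero] at hleft
  have hright := (hasSum_sum fun a ha =>
    hasSum_integral_irwinMeasure (hf' a (mem_range.mp ha))).mul_left (b : ℝ)⁻¹
  refine (hleft.congr_fun fun l => ?_).unique hright
  rw [sum_digitStrings_succ, ← mul_sum, ← mul_assoc, ← mul_inv, pow_succ']
  refine congrArg _ (sum_congr rfl fun a ha => sum_congr rfl fun r _ => ?_)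
  have hb : (0 : ℝ) < b := by exact_mod_cast (mem_range.mp ha).pos
  congr 1
  push_cast
  field_simp

theorem momentU_eq_integral (hdb : d < b) (m : ℕ) :
    momentU b d k m = ∫ x, x ^ m ∂irwinMeasure b d k := by
  have hint : Integrable (fun x => x ^ m) (irwinMeasure b d k) :=
    integrable_irwinMeasure_of_continuousOn hdb (by fun_prop)
  rw [← (hasSum_integral_irwinMeasure hint).tsum_eq]
  refine tsum_congr fun l => ?_
  rw [← sum_filter]
  change _ * ∑ n ∈ digitStrings b d k l, _ = _
  simp only [div_pow, ← sum_div, ← pow_mul, mul_add_one, pow_add]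
  field_simp

theorem momentU_zero (hdb : d < b) : momentU b d k 0 = b := by
  simp [momentU_eq_integral hdb, integral_const_irwinMeasure hdb]

theorem integral_irwinMeasure_mono (hdb : d < b) {f g : ℝ → ℝ}
    (hf : ContinuousOn f (Set.Icc 0 1)) (hg : ContinuousOn g (Set.Icc 0 1))
    (hfg : ∀ x ∈ Set.Icc (0 : ℝ) 1, f x ≤ g x) :
    ∫ x, f x ∂irwinMeasure b d k ≤ ∫ x, g x ∂irwinMeasure b d k := by
  refine integral_mono_ae (integrable_irwinMeasure_of_continuousOn hdb hf)
    (integrable_irwinMeasure_of_continuousOn hdb hg) ?_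
  filter_upwards [ae_mem_Icc_irwinMeasure b d k] with x hx using hfg x hx

theorem momentU_mem_Icc (hdb : d < b) (m : ℕ) : momentU b d k m ∈ Set.Icc (0 : ℝ) b := by
  rw [momentU_eq_integral hdb]
  constructor
  · simpa [integral_const_irwinMeasure hdb] using
      integral_irwinMeasure_mono (k := k) hdb (f := fun _ => 0) (g := (· ^ m)) (by fun_prop)
        (by fun_prop) fun x hx => pow_nonneg hx.1 m
  · simpa [integral_const_irwinMeasure hdb] using
      integral_irwinMeasure_mono (k := k) hdb (f := (· ^ m)) (g := fun _ => 1) (by fun_prop)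
        (by fun_prop) fun x hx => pow_le_one₀ hx.1 hx.2

theorem abs_momentU_sub_le (hdb : d < b) (k i m : ℕ) :
    |momentU b d k m - momentU b d i m| ≤ b := by
  obtain ⟨hk, hk'⟩ := momentU_mem_Icc (k := k) hdb m
  obtain ⟨hi, hi'⟩ := momentU_mem_Icc (k := i) hdb m
  exact abs_sub_le_of_nonneg_of_le hk hk' hi hi'

end IrwinMeasure

section Stieltjes

open Finset MeasureTheory

/-- The Stieltjes transform `U_k(t) = ∫ dμ_k(x) / (t + x)` of the Irwin measure. -/
noncomputable def irwinStieltjes (b d k : ℕ) (t : ℝ) : ℝ :=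
  ∫ x, (t + x)⁻¹ ∂irwinMeasure b d k

/-- The difference `U_k(t) - U_{k+1}(t)` of consecutive Stieltjes transforms. It decays like
`t ^ (-2)`, since `μ_k` and `μ_{k+1}` have the same total mass. -/
noncomputable def irwinStieltjesDiff (b d k : ℕ) (t : ℝ) : ℝ :=
  irwinStieltjes b d k t - irwinStieltjes b d (k + 1) t

variable {b d k : ℕ} {t : ℝ}

theorem continuousOn_inv_add (ht : 0 < t) :
    ContinuousOn (fun x : ℝ => (t + x)⁻¹) (Set.Icc 0 1) :=
  ContinuousOn.inv₀ (by fun_prop) fun _ hx => (add_pos_of_pos_of_nonneg ht hx.1).ne'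

theorem integrable_inv_add_irwinMeasure (hdb : d < b) (ht : 0 < t) :
    Integrable (fun x => (t + x)⁻¹) (irwinMeasure b d k) :=
  integrable_irwinMeasure_of_continuousOn hdb (continuousOn_inv_add ht)

theorem irwinStieltjes_le (hdb : d < b) (ht : 0 < t) : irwinStieltjes b d k t ≤ b / t := by
  rw [div_eq_mul_inv, ← integral_const_irwinMeasure (k := k) hdb]
  refine integral_irwinMeasure_mono hdb (continuousOn_inv_add ht) continuousOn_const fun x hx => ?_
  exact inv_anti₀ ht (le_add_of_nonneg_right hx.1)

theorem le_irwinStieltjes (hdb : d < b) (ht : 0 < t) : b / (t + 1) ≤ irwinStieltjes b d k t := by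
  rw [div_eq_mul_inv, ← integral_const_irwinMeasure (k := k) hdb]
  refine integral_irwinMeasure_mono hdb continuousOn_const (continuousOn_inv_add ht) fun x hx => ?_
  exact inv_anti₀ (add_pos_of_pos_of_nonneg ht hx.1) (by gcongr; exact hx.2)

theorem abs_irwinStieltjesDiff_le (hdb : d < b) (ht : 0 < t) :
    |irwinStieltjesDiff b d k t| ≤ b * (1 / t ^ 2) := by
  have hgap : b / t - b / (t + 1) ≤ b * (1 / t ^ 2) := by
    rw [div_sub_div _ _ ht.ne' (by positivity), mul_one_div, div_le_div_iff₀ (by positivity)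
      (by positivity)]
    nlinarith [(by positivity : 0 ≤ (b : ℝ) * t)]
  have hk := irwinStieltjes_le (k := k) hdb ht
  have hk' := le_irwinStieltjes (k := k) hdb ht
  have hk₁ := irwinStieltjes_le (k := k + 1) hdb ht
  have hk₁' := le_irwinStieltjes (k := k + 1) hdb ht
  rw [irwinStieltjesDiff, abs_le]
  constructor <;> linarith

theorem irwinStieltjes_succ (hdb : d < b) (ht : 0 < t) :
    irwinStieltjes b d (k + 1) t =
      ∑ a ∈ range b, irwinStieltjes b d (if a = d then k else k + 1) (b * t + a) := by
  have hb : (0 : ℝ) < b := by exact_mod_cast hdb.pos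
  have hscale (a : ℕ) (x : ℝ) : (t + (a + x) / b)⁻¹ = b * (b * t + a + x)⁻¹ := by
    rw [add_assoc, show b * t + (a + x) = b * (t + (a + x) / b) by field_simp, mul_inv,
      mul_inv_cancel_left₀ hb.ne']
  have hint (a i : ℕ) : Integrable (fun x => (t + (a + x) / b)⁻¹) (irwinMeasure b d i) := by
    simpa only [hscale] using
      (integrable_inv_add_irwinMeasure hdb (by positivity : 0 < b * t + a)).const_mul _
  rw [irwinStieltjes, integral_irwinMeasure_succ (integrable_inv_add_irwinMeasure hdb ht)
    fun a _ => hint a _]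
  simp only [hscale, integral_const_mul, ← mul_sum, inv_mul_cancel_left₀ hb.ne', irwinStieltjes]

theorem sum_irwinStieltjes_ite {s : Finset ℕ} (hd : d ∈ s) (t : ℕ → ℝ) :
    ∑ a ∈ s, irwinStieltjes b d (if a = d then k else k + 1) (t a) =
      ∑ a ∈ s, irwinStieltjes b d (k + 1) (t a) + irwinStieltjesDiff b d k (t d) := by
  have hrest : ∑ a ∈ s.erase d, irwinStieltjes b d (if a = d then k else k + 1) (t a) =
      ∑ a ∈ s.erase d, irwinStieltjes b d (k + 1) (t a) :=
    sum_congr rfl fun a ha => by rw [if_neg (ne_of_mem_erase ha)]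
  rw [← add_sum_erase s _ hd, ← add_sum_erase s _ hd, hrest, if_pos rfl, irwinStieltjesDiff]
  ring

theorem irwinStieltjes_succ_eq_sum_add_diff (hdb : d < b) (ht : 0 < t) :
    irwinStieltjes b d (k + 1) t =
      ∑ a ∈ range b, irwinStieltjes b d (k + 1) (b * t + a) +
        irwinStieltjesDiff b d k (b * t + d) := by
  rw [irwinStieltjes_succ hdb ht,
    sum_irwinStieltjes_ite (mem_range.mpr hdb) fun a => b * t + (a : ℝ)]

theorem irwinStieltjesDiff_succ (hdb : d < b) (ht : 0 < t) :
    irwinStieltjesDiff b d (k + 1) t =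
      ∑ a ∈ range b with a ≠ d, irwinStieltjesDiff b d (k + 1) (b * t + a) +
        irwinStieltjesDiff b d k (b * t + d) := by
  rw [filter_ne', sum_erase_eq_sub (mem_range.mpr hdb), irwinStieltjesDiff,
    irwinStieltjes_succ_eq_sum_add_diff (k := k) hdb ht,
    irwinStieltjes_succ_eq_sum_add_diff (k := k + 1) hdb ht]
  simp only [irwinStieltjesDiff, sum_sub_distrib]
  ring

theorem hasSum_irwinStieltjes (hdb : d < b) (ht : 1 < t) :
    HasSum (fun m => (-1) ^ m * momentU b d k m / t ^ (m + 1)) (irwinStieltjes b d k t) := by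
  have ht0 : 0 < t := one_pos.trans ht
  have hgeom : ∀ x ∈ Set.Icc (0 : ℝ) 1,
      HasSum (fun m => (-1) ^ m / t ^ (m + 1) * x ^ m) (t + x)⁻¹ := fun x hx => by
    have hx1 : ‖-(x / t)‖ < 1 := by
      rw [norm_neg, Real.norm_of_nonneg (div_nonneg hx.1 ht0.le), div_lt_one ht0]
      exact hx.2.trans_lt ht
    convert! (hasSum_geometric_of_norm_lt_one hx1).mul_left t⁻¹ using 1
    · ext m
      rw [neg_pow (x / t), div_pow, pow_succ]
      field_simp
    · rw [sub_neg_eq_add, ← mul_inv, mul_one_add, mul_div_cancel₀ _ ht0.ne']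
  have hnorm (m : ℕ) :
      ∫ x, ‖(-1) ^ m / t ^ (m + 1) * x ^ m‖ ∂irwinMeasure b d k ≤ b * (t⁻¹ * t⁻¹ ^ m) := by
    rw [← integral_const_irwinMeasure hdb]
    refine integral_irwinMeasure_mono hdb (by fun_prop) (by fun_prop) fun x hx => ?_
    rw [norm_mul, norm_div, norm_pow, norm_neg, norm_one, one_pow, one_div,
      Real.norm_of_nonneg (by positivity), Real.norm_of_nonneg (pow_nonneg hx.1 m), ← pow_succ',
      inv_pow]
    exact mul_le_of_le_one_right (by positivity) (pow_le_one₀ hx.1 hx.2)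
  have hsummable : Summable fun m : ℕ =>
      ∫ x, ‖(-1) ^ m / t ^ (m + 1) * x ^ m‖ ∂irwinMeasure b d k :=
    .of_nonneg_of_le (fun m => integral_nonneg fun x => norm_nonneg _) hnorm
      (((summable_geometric_of_lt_one (by positivity) (inv_lt_one_of_one_lt₀ ht)).mul_left
        _).mul_left _)
  have hsum := hasSum_integral_of_summable_integral_norm (fun m : ℕ =>
    integrable_irwinMeasure_of_continuousOn (k := k) hdb (by fun_prop)) hsummable
  have hlimit : ∫ x, ∑' m : ℕ, (-1) ^ m / t ^ (m + 1) * x ^ m ∂irwinMeasure b d k =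
      irwinStieltjes b d k t := by
    refine integral_congr_ae ?_
    filter_upwards [ae_mem_Icc_irwinMeasure b d k] with x hx using (hgeom x hx).tsum_eq
  rw [hlimit] at hsum
  refine hsum.congr_fun fun m => ?_
  rw [integral_const_mul, momentU_eq_integral hdb]
  ring

theorem hasSum_irwinStieltjesDiff (hdb : d < b) (ht : 1 < t) :
    HasSum (fun j => (-1) ^ j * (momentU b d (k + 1) (j + 1) - momentU b d k (j + 1)) /
      t ^ (j + 2)) (irwinStieltjesDiff b d k t) := by
  have h := (hasSum_nat_add_iff' 1).mpr
    ((hasSum_irwinStieltjes (k := k) hdb ht).sub (hasSum_irwinStieltjes (k := k + 1) hdb ht))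
  simp only [sum_range_one, momentU_zero hdb, sub_self, sub_zero] at h
  refine h.congr_fun fun j => ?_
  ring

theorem hasSum_tsum_irwinStieltjesDiff (hdb : d < b) {ι : Type*} {t : ι → ℝ}
    {c : ℝ}
    (hc : 1 < c) (ht : ∀ i, c ≤ t i) (hs : Summable fun i => 1 / t i ^ 2) :
    HasSum (fun j => (-1) ^ j * (momentU b d (k + 1) (j + 1) - momentU b d k (j + 1)) *
      ∑' i, 1 / t i ^ (j + 2)) (∑' i, irwinStieltjesDiff b d k (t i)) := by
  have hc0 : 0 < c := one_pos.trans hc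
  set F : ι × ℕ → ℝ := fun p =>
    (-1) ^ p.2 * (momentU b d (k + 1) (p.2 + 1) - momentU b d k (p.2 + 1)) / t p.1 ^ (p.2 + 2)
    with hF
  have hbound (p : ι × ℕ) : ‖F p‖ ≤ b * (1 / t p.1 ^ 2) * (1 / c) ^ p.2 := by
    have ht0 : 0 < t p.1 := hc0.trans_le (ht p.1)
    rw [hF, norm_div, norm_mul, norm_pow, norm_neg, norm_one, one_pow, one_mul,
      Real.norm_of_nonneg (by positivity : 0 ≤ t p.1 ^ (p.2 + 2)), Real.norm_eq_abs]
    calc _ ≤ b / t p.1 ^ (p.2 + 2) := by gcongr; exact abs_momentU_sub_le hdb _ _ _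
      _ = b * (1 / t p.1 ^ 2) * (1 / t p.1) ^ p.2 := by rw [pow_add, one_div_pow]; field_simp
      _ ≤ b * (1 / t p.1 ^ 2) * (1 / c) ^ p.2 := by gcongr; exact ht p.1
  have hFs : Summable F := .of_norm_bounded
    ((hs.mul_left (b : ℝ)).mul_of_nonneg
      (summable_geometric_of_lt_one (by positivity) ((div_lt_one hc0).mpr hc))
      (fun i => by positivity) fun j => by positivity) hbound
  have hrow (i : ι) := hasSum_irwinStieltjesDiff (k := k) hdb (hc.trans_le (ht i))
  have htotal : ∑' p : ℕ × ι, F p.swap = ∑' i, irwinStieltjesDiff b d k (t i) := by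
    refine ((Equiv.prodComm ℕ ι).tsum_eq F).trans ?_
    rw [hFs.tsum_prod]
    exact tsum_congr fun i => (hrow i).tsum_eq
  have hcol (j : ℕ) : ∑' i, F (i, j) = (-1) ^ j *
      (momentU b d (k + 1) (j + 1) - momentU b d k (j + 1)) * ∑' i, 1 / t i ^ (j + 2) := by
    rw [← tsum_mul_left]
    exact tsum_congr fun i => (mul_one_div _ _).symm
  rw [← htotal]
  simp only [← hcol]
  exact hFs.prod_symm.hasSum.prod_fiberwise fun j => (hFs.prod_symm.prod_factor j).hasSum

end Stieltjes

section IrwinSum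

open Finset

variable {b d k : ℕ}

theorem summable_one_div_mul_add_pow {c e : ℝ} (hc : 0 < c) (he : 0 ≤ e) {p : ℕ} (hp : 1 < p) :
    Summable fun n : ℕ => 1 / (c * (n + 1) + e) ^ p := by
  have hzeta : Summable fun n : ℕ => 1 / ((n + 1 : ℕ) : ℝ) ^ p :=
    (summable_nat_add_iff 1).mpr (Real.summable_one_div_nat_pow.mpr hp)
  refine .of_nonneg_of_le (fun n => by positivity) (fun n => ?_) (hzeta.mul_left (1 / c ^ p))
  rw [one_div_mul_one_div, ← mul_pow]
  push_cast
  gcongr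
  linarith

theorem irwinSum_succ_eq_sum_irwinStieltjes (hb : 1 < b) (hdb : d < b) :
    irwinSum b d (k + 1) =
      ∑ a ∈ Ico 1 b, irwinStieltjes b d (if a = d then k else k + 1) a := by
  set f : ℕ → ℝ := fun m => if 0 < m ∧ (Nat.digits b m).count d = k + 1 then (1 : ℝ) / m else 0
    with hf
  have hf0 (m : ℕ) : 0 ≤ f m := by
    rw [hf]
    positivity
  have hblock (l : ℕ) : ∑ m ∈ Ico (b ^ l) (b ^ (l + 1)), f m =
      ∑ a ∈ Ico 1 b, ((b : ℝ) ^ l)⁻¹ *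
        ∑ r ∈ digitStrings b d (if a = d then k else k + 1) l, ((a : ℝ) + r / b ^ l)⁻¹ := by
    have hpos : 0 < b ^ l := by positivity
    have hsplit := sum_filter_digitCount_succ (d := d) (k := k) (l := l) hb.le
      fun m => (1 : ℝ) / m
    rw [one_mul, sum_filter] at hsplit
    have hcount : ∀ m ∈ Ico (b ^ l) (b ^ (l + 1)),
        f m = if digitCount b d (l + 1) m = k + 1 then (1 : ℝ) / m else 0 := fun m hm => by
      simp only [hf, count_digits_eq_digitCount hb hm,
        and_iff_right (hpos.trans_le (mem_Ico.mp hm).1)]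
    rw [sum_congr rfl hcount, hsplit]
    refine sum_congr rfl fun a _ => ?_
    rw [mul_sum]
    refine sum_congr rfl fun r _ => ?_
    rw [← mul_inv, one_div]
    push_cast
    field_simp
  have hsum := hasSum_sum fun a (ha : a ∈ Ico 1 b) => hasSum_integral_irwinMeasure
    (integrable_inv_add_irwinMeasure (k := if a = d then k else k + 1) hdb
      (t := a) (by exact_mod_cast (mem_Ico.mp ha).1))
  simp only [← hblock] at hsum
  have h := hasSum_of_hasSum_sum_Ico hf0 (pow_right_mono₀ hb.le)
    (tendsto_pow_atTop_atTop_of_one_lt hb) hsum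
  have hf_zero : f 0 = 0 := if_neg fun h0 => h0.1.ne rfl
  rw [pow_zero, sum_range_one, hf_zero, zero_add] at h
  exact h.tsum_eq

theorem hasSum_irwinStieltjesDiff_mul_add (hdb : d < b) :
    HasSum (fun n : ℕ => irwinStieltjesDiff b d k (b * (n + 1) + d))
      (∑ m ∈ Ico 1 b, irwinStieltjes b d (k + 1) m - b * Real.log b) := by
  have hb : (0 : ℝ) < b := by exact_mod_cast hdb.pos
  set G : ℕ → ℝ := fun N => ∑ m ∈ Ico N (b * N), irwinStieltjes b d (k + 1) m with hG
  have hstep (n : ℕ) : irwinStieltjesDiff b d k (b * (n + 1) + d) = G (n + 1) - G (n + 2) := by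
    have hself := irwinStieltjes_succ_eq_sum_add_diff (k := k) hdb n.cast_add_one_pos
    have hlow : ∑ m ∈ Ico (n + 1) (b * (n + 2)), irwinStieltjes b d (k + 1) m =
        irwinStieltjes b d (k + 1) (n + 1) + G (n + 2) := by
      rw [sum_eq_sum_Ico_succ_bot (by nlinarith [hdb.pos]), Nat.cast_add_one]
    have hupp : ∑ m ∈ Ico (n + 1) (b * (n + 2)), irwinStieltjes b d (k + 1) m =
        G (n + 1) + ∑ a ∈ range b, irwinStieltjes b d (k + 1) (b * (n + 1) + a) := by
      rw [Nat.mul_succ b (n + 1), ← sum_Ico_consecutive _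
        (Nat.le_mul_of_pos_left (n + 1) hdb.pos) (Nat.le_add_right _ b),
        sum_Ico_eq_sum_range _ (b * (n + 1)), Nat.add_sub_cancel_left]
      push_cast
      rfl
    linarith
  have hsummable : Summable fun n : ℕ => irwinStieltjesDiff b d k (b * (n + 1) + d) :=
    .of_norm_bounded
      ((summable_one_div_mul_add_pow hb d.cast_nonneg one_lt_two).mul_left (b : ℝ))
      fun n => abs_irwinStieltjesDiff_le hdb (by positivity)
  have hlim : Tendsto G atTop (nhds (b * Real.log b)) :=
    tendsto_sum_Ico_mul_of_le_of_le hdb.pos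
      (fun m hm => le_irwinStieltjes hdb (by exact_mod_cast hm))
      fun m hm => irwinStieltjes_le hdb (by exact_mod_cast hm)
  rw [hsummable.hasSum_iff_tendsto_nat]
  simp only [hstep, sum_range_sub' fun n => G (n + 1)]
  simpa [hG] using ((tendsto_add_atTop_iff_nat 1).mpr hlim).const_sub (G 1)

theorem irwinSum_succ (hd : 0 < d) (hdb : d < b) :
    irwinSum b d (k + 1) = b * Real.log b +
      ∑' n : ℕ, irwinStieltjesDiff b d k (b * (n + 1) + d) + irwinStieltjesDiff b d k d := by
  rw [irwinSum_succ_eq_sum_irwinStieltjes (by lia) hdb,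
    sum_irwinStieltjes_ite (mem_Ico.mpr ⟨hd, hdb⟩) fun a => (a : ℝ),
    (hasSum_irwinStieltjesDiff_mul_add hdb).tsum_eq]
  ring

end IrwinSum

/-- Exact convergent series for `I(b,d,k)`, `0 < d < b`, `k ≥ 2`
(series over `m ≥ 1` indexed by `m = j + 1`, series over `n ≥ 1` indexed by `n + 1`). -/
theorem irwin_d_k_series (b d k : ℕ) (hd : 0 < d) (hdb : d < b) (hk : 2 ≤ k) :
    (∀ j : ℕ, Summable fun n : ℕ =>
      1 / ((b : ℝ) * (n + 1) + d) ^ (j + 2)) ∧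
    Summable (fun j : ℕ =>
      (-1 : ℝ) ^ j * (momentU b d k (j + 1) - momentU b d (k - 1) (j + 1)) *
        ((∑' n : ℕ, 1 / ((b : ℝ) * (n + 1) + d) ^ (j + 2))
          + ∑ a ∈ Finset.range b, if a ≠ d then 1 / ((b : ℝ) * d + a) ^ (j + 2) else 0)) ∧
    Summable (fun j : ℕ =>
      (-1 : ℝ) ^ j * (momentU b d (k - 1) (j + 1) - momentU b d (k - 2) (j + 1))
        / ((b : ℝ) * d + d) ^ (j + 2)) ∧
    irwinSum b d k = (b : ℝ) * Real.log b +
      (∑' j : ℕ,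
        (-1 : ℝ) ^ j * (momentU b d k (j + 1) - momentU b d (k - 1) (j + 1)) *
          ((∑' n : ℕ, 1 / ((b : ℝ) * (n + 1) + d) ^ (j + 2))
            + ∑ a ∈ Finset.range b, if a ≠ d then 1 / ((b : ℝ) * d + a) ^ (j + 2) else 0)) +
      ∑' j : ℕ,
        (-1 : ℝ) ^ j * (momentU b d (k - 1) (j + 1) - momentU b d (k - 2) (j + 1))
          / ((b : ℝ) * d + d) ^ (j + 2) := by
  obtain ⟨k, rfl⟩ := Nat.exists_eq_add_of_le' hk
  have hb : (2 : ℝ) ≤ b := by exact_mod_cast (by lia : 2 ≤ b)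
  have hd' : (1 : ℝ) ≤ d := by exact_mod_cast hd
  have hsummable (j : ℕ) : Summable fun n : ℕ => 1 / ((b : ℝ) * (n + 1) + d) ^ (j + 2) :=
    summable_one_div_mul_add_pow (by positivity) d.cast_nonneg (by lia)
  have htail := hasSum_tsum_irwinStieltjesDiff (k := k + 1) hdb one_lt_two
    (fun n : ℕ => (by nlinarith : (2 : ℝ) ≤ b * (n + 1) + d)) (hsummable 0)
  have hterm (i a : ℕ) :=
    hasSum_irwinStieltjesDiff (k := i) hdb (by nlinarith : (1 : ℝ) < b * d + a)
  have hmain := htail.add (hasSum_sum fun a (_ : a ∈ {a ∈ Finset.range b | a ≠ d}) =>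
    hterm (k + 1) a)
  simp only [show k + 2 - 1 = k + 1 by lia, show k + 2 - 2 = k by lia]
  simp only [← mul_one_div (_ * _), ← Finset.mul_sum, ← mul_add, Finset.sum_filter] at hmain
  refine ⟨hsummable, hmain.summable, (hterm k d).summable, ?_⟩
  rw [hmain.tsum_eq, (hterm k d).tsum_eq, irwinSum_succ hd hdb,
    irwinStieltjesDiff_succ hdb (Nat.cast_pos.mpr hd), Finset.sum_filter]
  ring
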